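/- arXiv:1405.2163 — 5 statements merged into one kernel-verified Lean document; each statement's English description precedes it below -/
import Mathlib

section
/- For every n ∈ ℕ, Γ(n + 3/2) > √(2·π·e) · ((n + 1/2)/e)^{n+1}, where Γ is the real Gamma function and e is Euler's number. -/
/-!
Write `x = n + 1/2`. The right-hand side is `√(2π) x ^ (x + 1/2) e ^ (-x)`, the Stirling
approximation of `Γ(x + 1)`, so the claim is that the ratio `R n` of the two sides exceeds `1`.

* `R` is strictly decreasing: by `Γ(x + 2) = (x + 1) Γ(x + 1)`, the quotient `R n / R (n + 1)` is
  `(1 + 1/x) ^ (x + 1/2) / e`, and `log (1 + 1/x) > 1 / (x + 1/2)`.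
* `R` tends to `1`: Legendre's duplication formula gives `Γ(m + 1/2) = √π (2m)! / (4 ^ m m!)`, and
  both factorials are controlled by Stirling's formula, leaving `(1 - 1/(2m)) ^ m → e ^ (-1/2)`.

Hence `R n > R (n + 1) ≥ 1`.
-/

open Real
open Filter Topology

/-- The ratio of `Γ(n + 3/2)` to its Stirling approximation. -/
noncomputable def stirlingRatio (n : ℕ) : ℝ :=
  Real.Gamma ((n : ℝ) + 3 / 2) /
    (Real.sqrt (2 * π * Real.exp 1) * (((n : ℝ) + 1 / 2) / Real.exp 1) ^ (n + 1))

/-- `(1 + 1/x) ^ (x + 1/2) > e` at `x = n + 1/2`, where the exponent is the integer `n + 1`. -/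
lemma exp_one_lt_pow (n : ℕ) :
    Real.exp 1 < (((n : ℝ) + 3 / 2) / ((n : ℝ) + 1 / 2)) ^ (n + 1) := by
  have hx : (0 : ℝ) < (n : ℝ) + 1 / 2 := by positivity
  have h := Real.lt_log_one_add_of_pos (x := 1 / ((n : ℝ) + 1 / 2)) (by positivity)
  have e1 : 2 * (1 / ((n : ℝ) + 1 / 2)) / (1 / ((n : ℝ) + 1 / 2) + 2) = 1 / ((n : ℝ) + 1) := by
    field_simp
    ring
  have e2 : 1 + 1 / ((n : ℝ) + 1 / 2) = ((n : ℝ) + 3 / 2) / ((n : ℝ) + 1 / 2) := by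
    field_simp
    ring
  rw [e1, e2] at h
  rw [← Real.lt_log_iff_exp_lt (by positivity), Real.log_pow]
  rw [div_lt_iff₀ (by positivity)] at h
  push_cast
  linarith

lemma stirlingRatio_succ_lt (n : ℕ) : stirlingRatio (n + 1) < stirlingRatio n := by
  have hG : 0 < Real.Gamma ((n : ℝ) + 3 / 2) := Real.Gamma_pos_of_pos (by positivity)
  have hrec : Real.Gamma (((n + 1 : ℕ) : ℝ) + 3 / 2)
      = ((n : ℝ) + 3 / 2) * Real.Gamma ((n : ℝ) + 3 / 2) := by
    rw [← Real.Gamma_add_one (by positivity)]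
    congr 1
    push_cast
    ring
  have hx : ((n + 1 : ℕ) : ℝ) + 1 / 2 = (n : ℝ) + 3 / 2 := by
    push_cast
    ring
  have h := exp_one_lt_pow n
  rw [div_pow, lt_div_iff₀ (by positivity)] at h
  unfold stirlingRatio
  rw [hrec, hx, div_lt_div_iff₀ (by positivity) (by positivity)]
  have key : ((n : ℝ) + 3 / 2) * (((n : ℝ) + 1 / 2) / Real.exp 1) ^ (n + 1)
      < (((n : ℝ) + 3 / 2) / Real.exp 1) ^ (n + 1 + 1) := by
    rw [div_pow, div_pow, mul_div_assoc', div_lt_div_iff₀ (by positivity) (by positivity)]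
    calc ((n : ℝ) + 3 / 2) * ((n : ℝ) + 1 / 2) ^ (n + 1) * Real.exp 1 ^ (n + 1 + 1)
        = ((n : ℝ) + 3 / 2) * Real.exp 1 ^ (n + 1)
            * (Real.exp 1 * ((n : ℝ) + 1 / 2) ^ (n + 1)) := by ring
      _ < ((n : ℝ) + 3 / 2) * Real.exp 1 ^ (n + 1) * ((n : ℝ) + 3 / 2) ^ (n + 1) := by gcongr
      _ = ((n : ℝ) + 3 / 2) ^ (n + 1 + 1) * Real.exp 1 ^ (n + 1) := by ring
  calc _ = Real.Gamma ((n : ℝ) + 3 / 2) * Real.sqrt (2 * π * Real.exp 1)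
        * (((n : ℝ) + 3 / 2) * (((n : ℝ) + 1 / 2) / Real.exp 1) ^ (n + 1)) := by ring
    _ < Real.Gamma ((n : ℝ) + 3 / 2) * Real.sqrt (2 * π * Real.exp 1)
        * (((n : ℝ) + 3 / 2) / Real.exp 1) ^ (n + 1 + 1) := by gcongr
    _ = _ := by ring

/-- The duplication formula at `s = m + 1/2`, as an identity between factorials. -/
lemma factorial_mul_Gamma (m : ℕ) :
    (m.factorial : ℝ) * Real.Gamma ((m : ℝ) + 1 / 2) * 4 ^ m = (2 * m).factorial * √π := by
  have h := Real.Gamma_mul_Gamma_add_half ((m : ℝ) + 1 / 2)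
  have e1 : (m : ℝ) + 1 / 2 + 1 / 2 = m + 1 := by ring
  have e2 : 2 * ((m : ℝ) + 1 / 2) = ((2 * m : ℕ) : ℝ) + 1 := by
    push_cast
    ring
  have e3 : (1 : ℝ) - (((2 * m : ℕ) : ℝ) + 1) = -((2 * m : ℕ) : ℝ) := by ring
  have e4 : (2 : ℝ) ^ (2 * m) = 4 ^ m := by
    rw [pow_mul]
    norm_num
  rw [e1, e2, e3, Real.Gamma_nat_eq_factorial, Real.Gamma_nat_eq_factorial,
    Real.rpow_neg (by norm_num), Real.rpow_natCast, e4] at h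
  rw [mul_comm (m.factorial : ℝ), h]
  field_simp

lemma stirlingRatio_eq (n : ℕ) :
    stirlingRatio n = Stirling.stirlingSeq (2 * (n + 1)) / Stirling.stirlingSeq (n + 1) /
      ((1 + (-1 / 2) / ((n + 1 : ℕ) : ℝ)) ^ (n + 1) * √(Real.exp 1)) := by
  have h := factorial_mul_Gamma (n + 1)
  have e1 : ((n + 1 : ℕ) : ℝ) + 1 / 2 = (n : ℝ) + 3 / 2 := by
    push_cast
    ring
  have e2 : 1 + (-1 / 2) / ((n + 1 : ℕ) : ℝ) = ((n : ℝ) + 1 / 2) / ((n + 1 : ℕ) : ℝ) := by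
    push_cast
    field_simp
    ring
  have e3 : √(2 * π * Real.exp 1) = √2 * √π * √(Real.exp 1) := by
    rw [Real.sqrt_mul (by positivity), Real.sqrt_mul (by positivity)]
  have e4 : √(2 * ((2 * (n + 1) : ℕ) : ℝ)) = √2 * √(2 * ((n + 1 : ℕ) : ℝ)) := by
    rw [← Real.sqrt_mul (by positivity)]
    push_cast
    rfl
  have e5 : (((2 * (n + 1) : ℕ) : ℝ) / Real.exp 1) ^ (2 * (n + 1))
      = 4 ^ (n + 1) * (((n + 1 : ℕ) : ℝ) / Real.exp 1) ^ (n + 1)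
        * (((n + 1 : ℕ) : ℝ) / Real.exp 1) ^ (n + 1) := by
    rw [pow_mul, ← mul_pow, ← mul_pow]
    push_cast
    ring
  rw [e1] at h
  have hG : Real.Gamma ((n : ℝ) + 3 / 2)
      = (2 * (n + 1)).factorial * √π / ((n + 1).factorial * 4 ^ (n + 1)) := by
    rw [eq_div_iff (by positivity), ← h]
    ring
  rw [stirlingRatio, Stirling.stirlingSeq, Stirling.stirlingSeq, e2, e3, e4, e5, hG,
    div_pow, div_pow, div_pow]
  have : (0 : ℝ) < ((n + 1 : ℕ) : ℝ) := by positivity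
  generalize ((n + 1 : ℕ) : ℝ) = y at *
  have : (0 : ℝ) < √(2 * y) := by positivity
  field_simp

lemma tendsto_stirlingRatio : Tendsto stirlingRatio atTop (𝓝 1) := by
  have hS := Stirling.tendsto_stirlingSeq_sqrt_pi
  have h1 : Tendsto (fun n : ℕ => n + 1) atTop atTop := tendsto_add_atTop_nat 1
  have h2 : Tendsto (fun n : ℕ => 2 * (n + 1)) atTop atTop :=
    tendsto_atTop_mono (fun n => by omega) h1
  have hE := (Real.tendsto_one_add_div_pow_exp (-1 / 2)).comp h1
  have hlim := ((hS.comp h2).div (hS.comp h1) (by positivity)).div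
    (hE.mul_const (√(Real.exp 1))) (by positivity)
  have hval : √π / √π / (Real.exp (-1 / 2) * √(Real.exp 1)) = 1 := by
    rw [← Real.exp_half, ← Real.exp_add, div_self (by positivity)]
    norm_num
  rw [hval] at hlim
  exact hlim.congr fun n => (stirlingRatio_eq n).symm

/-- Stirling-type lower bound for the Gamma function:
for every `n ∈ ℕ`, `Γ(n + 3/2) > √(2πe) ((n + 1/2)/e)^(n+1)`. -/
theorem gamma_stirling_lower_bound (n : ℕ) :
    Real.Gamma ((n : ℝ) + 3 / 2) >
      Real.sqrt (2 * π * Real.exp 1) * (((n : ℝ) + 1 / 2) / Real.exp 1) ^ (n + 1) := by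
  have hanti : Antitone stirlingRatio :=
    antitone_nat_of_succ_le fun k => (stirlingRatio_succ_lt k).le
  have h : 1 < stirlingRatio n :=
    (hanti.le_of_tendsto tendsto_stirlingRatio (n + 1)).trans_lt (stirlingRatio_succ_lt n)
  rwa [stirlingRatio, one_lt_div (by positivity)] at h
end

section
/- For every natural number n ≥ 1 and every real z > 0, (π/4) · (z/2)^{2n} / Γ(n + 3/2)² < (e / (2·(2n+1)²)) · (e·z/(2n+1))^{2n}, where Γ is the real Gamma function and e is Euler's number. -/
open Real

/-!
The inequality is equivalent to Stirling's strict lower bound at half-integers,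
`2πe < D n` where `D n = Γ(n + 3/2)² (e / (n + 1/2))^(2n + 2)`.

The sequence `D` is strictly decreasing: by `Γ(s + 1) = s Γ(s)` this amounts to
`e² < ((n + 3/2) / (n + 1/2))^(2n + 2)`, i.e. to `2t / (t + 2) < log (1 + t)` at
`t = 1 / (n + 1/2)`. So it suffices that `D` is eventually bounded below by a sequence tending
to `2πe`. Log-convexity of `Γ` gives `(n!)² ≤ Γ(n + 1/2) Γ(n + 3/2)`, hence
`(n + 1/2) (n!)² ≤ Γ(n + 3/2)²`, and Stirling's lower bound for `n!` then yields
`2πe · e / (1 + 1/(2n))^(2n + 1) ≤ D n`, whose left side tends to `2πe`.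
-/

/-- Ratio of `Γ(n + 3/2)²` to `((n + 1/2) / e)^(2n + 2)`, which by Stirling's formula tends
to `2πe`. -/
noncomputable def stirlingHalf (n : ℕ) : ℝ :=
  Real.Gamma ((n : ℝ) + 3 / 2) ^ 2 * (Real.exp 1 / ((n : ℝ) + 1 / 2)) ^ (2 * n + 2)

lemma exp_two_mul_lt (n : ℕ) :
    Real.exp 1 ^ 2 * ((n : ℝ) + 1 / 2) ^ (2 * n + 2) < ((n : ℝ) + 3 / 2) ^ (2 * n + 2) := by
  have hx : (0 : ℝ) < (n : ℝ) + 1 / 2 := by positivity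
  have h := Real.lt_log_one_add_of_pos (x := 1 / ((n : ℝ) + 1 / 2)) (by positivity)
  have e1 : 2 * (1 / ((n : ℝ) + 1 / 2)) / (1 / ((n : ℝ) + 1 / 2) + 2) = 2 / (2 * n + 2) := by
    field_simp
    ring
  have e2 : 1 + 1 / ((n : ℝ) + 1 / 2) = ((n : ℝ) + 3 / 2) / ((n : ℝ) + 1 / 2) := by
    field_simp
    ring
  rw [e1, e2, div_lt_iff₀ (by positivity)] at h
  have h2 : Real.exp 1 ^ 2 < (((n : ℝ) + 3 / 2) / ((n : ℝ) + 1 / 2)) ^ (2 * n + 2) := by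
    rw [← Real.exp_nat_mul, ← Real.lt_log_iff_exp_lt (by positivity), Real.log_pow]
    push_cast
    linarith
  rwa [div_pow, lt_div_iff₀ (by positivity)] at h2

lemma stirlingHalf_succ_lt (n : ℕ) : stirlingHalf (n + 1) < stirlingHalf n := by
  have hG : 0 < Real.Gamma ((n : ℝ) + 3 / 2) := Real.Gamma_pos_of_pos (by positivity)
  have hrec : Real.Gamma (((n + 1 : ℕ) : ℝ) + 3 / 2)
      = ((n : ℝ) + 3 / 2) * Real.Gamma ((n : ℝ) + 3 / 2) := by
    rw [← Real.Gamma_add_one (by positivity)]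
    congr 1
    push_cast
    ring
  have e1 : ((n + 1 : ℕ) : ℝ) + 1 / 2 = (n : ℝ) + 3 / 2 := by
    push_cast
    ring
  have h := exp_two_mul_lt n
  unfold stirlingHalf
  rw [hrec, e1]
  have ha : (0 : ℝ) < (n : ℝ) + 3 / 2 := by positivity
  have hb : (0 : ℝ) < (n : ℝ) + 1 / 2 := by positivity
  generalize (n : ℝ) + 3 / 2 = a at *
  generalize (n : ℝ) + 1 / 2 = b at *
  have e2 : (a * Real.Gamma a) ^ 2 * (Real.exp 1 / a) ^ (2 * (n + 1) + 2)
      = Real.Gamma a ^ 2 * Real.exp 1 ^ (2 * n + 2) * (Real.exp 1 ^ 2 / a ^ (2 * n + 2)) := by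
    rw [div_pow, show 2 * (n + 1) + 2 = (2 * n + 2) + 2 by ring, pow_add, pow_add a]
    field_simp
  have e3 : Real.Gamma a ^ 2 * (Real.exp 1 / b) ^ (2 * n + 2)
      = Real.Gamma a ^ 2 * Real.exp 1 ^ (2 * n + 2) * (1 / b ^ (2 * n + 2)) := by
    rw [div_pow]
    ring
  rw [e2, e3]
  refine mul_lt_mul_of_pos_left ?_ (by positivity)
  rw [div_lt_div_iff₀ (by positivity) (by positivity)]
  linarith

/-- Consequence of log-convexity of `Γ` at the midpoint `n + 1` of `n + 1/2` and `n + 3/2`. -/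
lemma mul_factorial_sq_le (n : ℕ) :
    ((n : ℝ) + 1 / 2) * (n.factorial : ℝ) ^ 2 ≤ Real.Gamma ((n : ℝ) + 3 / 2) ^ 2 := by
  have hb : (0 : ℝ) < (n : ℝ) + 1 / 2 := by positivity
  have ha : (0 : ℝ) < (n : ℝ) + 3 / 2 := by positivity
  have h := Real.Gamma_mul_add_mul_le_rpow_Gamma_mul_rpow_Gamma hb ha
    (a := 1 / 2) (b := 1 / 2) (by norm_num) (by norm_num) (by norm_num)
  rw [show 1 / 2 * ((n : ℝ) + 1 / 2) + 1 / 2 * ((n : ℝ) + 3 / 2) = (n : ℝ) + 1 by ring,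
    Real.Gamma_nat_eq_factorial, ← Real.sqrt_eq_rpow, ← Real.sqrt_eq_rpow] at h
  have hGb := Real.Gamma_pos_of_pos hb
  have hGa := Real.Gamma_pos_of_pos ha
  have h2 := pow_le_pow_left₀ (by positivity) h 2
  rw [mul_pow, Real.sq_sqrt hGb.le, Real.sq_sqrt hGa.le] at h2
  have hrec : Real.Gamma ((n : ℝ) + 3 / 2) = ((n : ℝ) + 1 / 2) * Real.Gamma ((n : ℝ) + 1 / 2) := by
    rw [← Real.Gamma_add_one hb.ne']
    congr 1
    ring
  calc ((n : ℝ) + 1 / 2) * (n.factorial : ℝ) ^ 2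
      ≤ ((n : ℝ) + 1 / 2) * (Real.Gamma ((n : ℝ) + 1 / 2) * Real.Gamma ((n : ℝ) + 3 / 2)) := by
        gcongr
    _ = Real.Gamma ((n : ℝ) + 3 / 2) ^ 2 := by
        rw [← mul_assoc, ← hrec, sq]

lemma le_stirlingHalf (n : ℕ) (hn : 1 ≤ n) :
    2 * π * Real.exp 1 *
      (Real.exp 1 / (((1 + (1 / 2) / (n : ℝ)) ^ n) ^ 2 * (1 + (1 / 2) / (n : ℝ))))
      ≤ stirlingHalf n := by
  have hn0 : (0 : ℝ) < n := by exact_mod_cast hn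
  have h1 := pow_le_pow_left₀ (by positivity) (Stirling.le_factorial_stirling n) 2
  rw [mul_pow, Real.sq_sqrt (by positivity)] at h1
  have h2 : ((n : ℝ) + 1 / 2) * (2 * π * n * (((n : ℝ) / Real.exp 1) ^ n) ^ 2)
      ≤ Real.Gamma ((n : ℝ) + 3 / 2) ^ 2 :=
    (mul_le_mul_of_nonneg_left h1 (by positivity)).trans (mul_factorial_sq_le n)
  unfold stirlingHalf
  refine le_trans (le_of_eq ?_) (mul_le_mul_of_nonneg_right h2 (by positivity))
  have e1 : 1 + (1 / 2) / (n : ℝ) = ((n : ℝ) + 1 / 2) / n := by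
    field_simp
  have hb : (0 : ℝ) < (n : ℝ) + 1 / 2 := by positivity
  rw [e1]
  generalize (n : ℝ) + 1 / 2 = b at *
  simp only [div_pow, pow_add, pow_mul']
  field_simp

lemma two_pi_exp_lt_stirlingHalf (n : ℕ) : 2 * π * Real.exp 1 < stirlingHalf n := by
  have hanti : Antitone stirlingHalf :=
    antitone_nat_of_succ_le fun k => (stirlingHalf_succ_lt k).le
  have hpow := Real.tendsto_one_add_div_pow_exp (1 / 2)
  have hone : Filter.Tendsto (fun m : ℕ => 1 + (1 / 2 : ℝ) / (m : ℝ)) Filter.atTop (nhds 1) := by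
    simpa using (tendsto_const_div_atTop_nhds_zero_nat (1 / 2 : ℝ)).const_add 1
  have hlim : Filter.Tendsto (fun m : ℕ => 2 * π * Real.exp 1 *
      (Real.exp 1 / (((1 + (1 / 2) / (m : ℝ)) ^ m) ^ 2 * (1 + (1 / 2) / (m : ℝ)))))
      Filter.atTop (nhds (2 * π * Real.exp 1)) := by
    have h := ((tendsto_const_nhds (x := Real.exp 1)).div ((hpow.pow 2).mul hone)
      (by positivity)).const_mul (2 * π * Real.exp 1)
    have e : Real.exp (1 / 2) ^ 2 * 1 = Real.exp 1 := by
      rw [mul_one, ← Real.exp_nat_mul]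
      norm_num
    rw [e, div_self (Real.exp_pos 1).ne', mul_one] at h
    exact h
  have hle : 2 * π * Real.exp 1 ≤ stirlingHalf (n + 1) := by
    refine le_of_tendsto hlim ?_
    filter_upwards [Filter.eventually_ge_atTop (n + 1)] with m hm
    exact (le_stirlingHalf m (by omega)).trans (hanti hm)
  exact hle.trans_lt (stirlingHalf_succ_lt n)

/-- For every natural number `n ≥ 1` and every real `z > 0`,
`(π/4) (z/2)^{2n} / Γ(n + 3/2)² < (e / (2 (2n+1)²)) (e z / (2n+1))^{2n}`. -/
theorem envelope_sq_lt (n : ℕ) (hn : 1 ≤ n) (z : ℝ) (hz : 0 < z) :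
    π / 4 * (z / 2) ^ (2 * n) / (Real.Gamma ((n : ℝ) + 3 / 2)) ^ 2 <
      Real.exp 1 / (2 * (2 * (n : ℝ) + 1) ^ 2) *
        (Real.exp 1 * z / (2 * (n : ℝ) + 1)) ^ (2 * n) := by
  have h := two_pi_exp_lt_stirlingHalf n
  have hG : 0 < Real.Gamma ((n : ℝ) + 3 / 2) := Real.Gamma_pos_of_pos (by positivity)
  have hb : (0 : ℝ) < (n : ℝ) + 1 / 2 := by positivity
  unfold stirlingHalf at h
  rw [div_lt_iff₀ (by positivity)]
  have e1 : 2 * (n : ℝ) + 1 = 2 * ((n : ℝ) + 1 / 2) := by ring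
  rw [e1]
  generalize Real.Gamma ((n : ℝ) + 3 / 2) = G at *
  generalize (n : ℝ) + 1 / 2 = b at *
  have key := mul_lt_mul_of_pos_left h
    (show 0 < (z / 2) ^ (2 * n) / (8 * Real.exp 1) by positivity)
  have e2 : (z / 2) ^ (2 * n) / (8 * Real.exp 1) * (2 * π * Real.exp 1)
      = π / 4 * (z / 2) ^ (2 * n) := by
    field_simp
    ring
  have e3 : (z / 2) ^ (2 * n) / (8 * Real.exp 1) * (G ^ 2 * (Real.exp 1 / b) ^ (2 * n + 2))
      = Real.exp 1 / (2 * (2 * b) ^ 2) * (Real.exp 1 * z / (2 * b)) ^ (2 * n) * G ^ 2 := by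
    rw [show Real.exp 1 * z / (2 * b) = (z / 2) * (Real.exp 1 / b) by ring, mul_pow (z / 2),
      pow_add]
    field_simp
    ring
  rwa [e2, e3] at key
end

section
/- Let W > 0 be a real number and define sinc_W : ℝ → ℝ by sinc_W(τ) = sin(π·W·τ)/(π·W·τ) for τ ≠ 0 and sinc_W(0) = 1. Then for all integers ℓ, ℓ′: ∫_ℝ sinc_W(t − ℓ/W) · sinc_W(t − ℓ′/W) dt equals 0 if ℓ ≠ ℓ′ and equals 1/W if ℓ = ℓ′. -/
/-!
The proof combines periodisation with Parseval's identity. Write `S x = sinc (π x)`. On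
`[-1/2, 1/2]` the `k`-th Fourier coefficient of `x ↦ exp (2 π i s x)` is `S (s - k)`
(`integral_exp_eq_sinc`), so polarising Parseval's identity gives
`∑ₖ S (s - k) S (t - k) = S (s - t)` for all real `s`, `t` (`hasSum_sinc_mul_sinc`).
After the substitution `u = W t`, the integral over `ℝ` becomes the integral over `[0, 1]` of the sum
over integer translates of the integrand. For integers `ℓ`, `ℓ'` that sum is the constant
`S (ℓ' - ℓ)`, which is `1` if `ℓ = ℓ'` and `0` otherwise. Exchanging sum and integral is allowed
because `S² ≤ 2 / (1 + x²)` makes the integrand integrable.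
-/

open Real MeasureTheory

/-- `sinc_W(τ) = sin(πWτ)/(πWτ)` for `τ ≠ 0`, and `sinc_W(0) = 1`. -/
noncomputable def sincW (W τ : ℝ) : ℝ :=
  if τ = 0 then 1 else Real.sin (π * W * τ) / (π * W * τ)

lemma integral_exp_eq_sinc (s : ℝ) :
    ∫ x in (-(1 / 2) : ℝ)..(1 / 2), Complex.exp (2 * π * s * x * Complex.I)
      = (sinc (π * s) : ℂ) := by
  rcases eq_or_ne s 0 with rfl | hs
  · norm_num
  have hc : 2 * π * s ≠ 0 := by positivity
  have h := intervalIntegral.integral_comp_mul_left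
    (fun t : ℝ => Complex.exp (t * Complex.I)) (a := -(1 / 2)) (b := 1 / 2) hc
  rw [show 2 * π * s * -(1 / 2) = -(π * s) by ring, show 2 * π * s * (1 / 2) = π * s by ring,
    integral_exp_mul_I_eq_sinc] at h
  push_cast at h
  rw [h, Complex.real_smul]
  have : (π : ℂ) ≠ 0 := by exact_mod_cast pi_ne_zero
  have : (s : ℂ) ≠ 0 := by exact_mod_cast hs
  push_cast
  field_simp

/-- Parseval's identity for the sum of the exponentials of frequencies `s` and `t`. -/
lemma hasSum_sinc_add_sq (s t : ℝ) :
    HasSum (fun k : ℤ => (sinc (π * (s - k)) + sinc (π * (t - k))) ^ 2)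
      (2 + 2 * sinc (π * (s - t))) := by
  set f : ℝ → ℂ := fun x =>
    Complex.exp (2 * π * s * x * Complex.I) + Complex.exp (2 * π * t * x * Complex.I) with hf
  have hab : (-(1 / 2) : ℝ) < 1 / 2 := by norm_num
  have hfc : Continuous f := by fun_prop
  have hL2 : MemLp f 2 (volume.restrict (Set.Ioc (-(1 / 2) : ℝ) (1 / 2))) := by
    refine MemLp.of_bound hfc.aestronglyMeasurable 2 (.of_forall fun x => ?_)
    refine (norm_add_le _ _).trans ?_
    have h1 : ∀ r : ℝ, ‖Complex.exp (2 * π * r * x * Complex.I)‖ = 1 := fun r => by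
      exact_mod_cast Complex.norm_exp_ofReal_mul_I (2 * π * r * x)
    rw [h1, h1]; norm_num
  have key := hasSum_sq_fourierCoeffOn hab hL2
  have hcoef : ∀ k : ℤ, fourierCoeffOn hab f k
      = ((sinc (π * (s - k)) + sinc (π * (t - k)) : ℝ) : ℂ) := fun k => by
    rw [fourierCoeffOn_eq_integral]
    push_cast
    have h1 := integral_exp_eq_sinc (s - k)
    have h2 := integral_exp_eq_sinc (t - k)
    rw [← h1, ← h2, ← intervalIntegral.integral_add
      (Continuous.intervalIntegrable (by fun_prop) _ _)
      (Continuous.intervalIntegrable (by fun_prop) _ _)]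
    rw [show (1 : ℝ) / (1 / 2 - -(1 / 2)) = 1 by norm_num, one_smul]
    refine intervalIntegral.integral_congr fun x _ => ?_
    simp only [fourier_coe_apply, hf, smul_eq_mul, mul_add, ← Complex.exp_add]
    congr 2 <;> · push_cast; ring_nf
  have hnorm : ∫ x in (-(1 / 2) : ℝ)..(1 / 2), ‖f x‖ ^ 2 = 2 + 2 * sinc (π * (s - t)) := by
    apply Complex.ofReal_injective
    rw [← intervalIntegral.integral_ofReal]
    have h1 := integral_exp_eq_sinc (s - t)
    have h2 := integral_exp_eq_sinc (t - s)
    rw [show π * (t - s) = -(π * (s - t)) by ring, sinc_neg] at h2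
    have h3 : ∫ x in (-(1 / 2) : ℝ)..(1 / 2), (2 : ℂ) = 2 := by
      rw [intervalIntegral.integral_const]; norm_num
    calc _ = ∫ x in (-(1 / 2) : ℝ)..(1 / 2), ((2 : ℂ)
          + Complex.exp (2 * π * (s - t : ℝ) * x * Complex.I)
          + Complex.exp (2 * π * (t - s : ℝ) * x * Complex.I)) := by
          refine intervalIntegral.integral_congr fun x _ => ?_
          have e1 : ∀ r : ℝ, (starRingEnd ℂ) (Complex.exp (2 * π * r * x * Complex.I))
              = Complex.exp (-(2 * π * r * x * Complex.I)) := fun r => by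
            rw [← Complex.exp_conj]; simp [Complex.conj_ofNat]
          simp only [Complex.ofReal_pow]
          rw [← Complex.mul_conj', hf]
          simp only [map_add, e1, add_mul, mul_add, ← Complex.exp_add, add_neg_cancel,
            Complex.exp_zero]
          rw [show 2 * π * s * x * Complex.I + -(2 * π * t * x * Complex.I)
              = 2 * π * (s - t : ℝ) * x * Complex.I by push_cast; ring,
            show 2 * π * t * x * Complex.I + -(2 * π * s * x * Complex.I)
              = 2 * π * (t - s : ℝ) * x * Complex.I by push_cast; ring]
          ring
      _ = _ := by
          rw [intervalIntegral.integral_add (Continuous.intervalIntegrable (by fun_prop) _ _)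
              (Continuous.intervalIntegrable (by fun_prop) _ _),
            intervalIntegral.integral_add (Continuous.intervalIntegrable (by fun_prop) _ _)
              (Continuous.intervalIntegrable (by fun_prop) _ _), h1, h2, h3]
          push_cast; ring
  rw [hnorm] at key
  simp only [hcoef, Complex.norm_real, norm_eq_abs, sq_abs] at key
  norm_num at key
  exact key

lemma hasSum_sinc_mul_sinc (s t : ℝ) :
    HasSum (fun k : ℤ => sinc (π * (s - k)) * sinc (π * (t - k))) (sinc (π * (s - t))) := by
  have h1 := hasSum_sinc_add_sq s t
  have h2 := (hasSum_sinc_add_sq s s).mul_left (1 / 8)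
  have h3 := (hasSum_sinc_add_sq t t).mul_left (1 / 8)
  have h := (h1.mul_left (1 / 2)).sub (h2.add h3)
  rw [show 1 / 2 * (2 + 2 * sinc (π * (s - t))) - (1 / 8 * (2 + 2 * sinc (π * (s - s)))
      + 1 / 8 * (2 + 2 * sinc (π * (t - t)))) = sinc (π * (s - t)) by
    simp only [sub_self, mul_zero, sinc_zero]; ring] at h
  refine h.congr_fun fun k => ?_
  ring

lemma integrable_sinc_sq : Integrable fun x : ℝ => sinc (π * x) ^ 2 := by
  refine (integrable_inv_one_add_sq.const_mul 2).mono'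
    (by have := continuous_sinc; fun_prop) (.of_forall fun x => ?_)
  rw [norm_of_nonneg (sq_nonneg _), ← div_eq_mul_inv, le_div_iff₀ (by positivity)]
  have h1 : sinc (π * x) ^ 2 ≤ 1 := (sq_le_one_iff_abs_le_one _).2 (abs_sinc_le_one _)
  have h2 : sinc (π * x) ^ 2 * x ^ 2 ≤ 1 := by
    rcases eq_or_ne x 0 with rfl | hx
    · simp
    rw [sinc_of_ne_zero (by positivity), div_pow, mul_pow]
    have : sin (π * x) ^ 2 ≤ 1 := sin_sq_le_one _
    have h3 : (1 : ℝ) ≤ π ^ 2 := by nlinarith [pi_gt_three]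
    rw [div_mul_eq_mul_div, div_le_one (by positivity)]
    exact mul_le_mul_of_nonneg_right (this.trans h3) (sq_nonneg _)
  linarith

lemma integral_sinc_mul_sinc (ℓ ℓ' : ℤ) :
    ∫ u : ℝ, sinc (π * (u - ℓ)) * sinc (π * (u - ℓ')) = if ℓ = ℓ' then 1 else 0 := by
  set g : ℝ → ℝ := fun u => sinc (π * (u - ℓ)) * sinc (π * (u - ℓ')) with hg
  have hgc : Continuous g := by have := continuous_sinc; fun_prop
  have hgi : Integrable g := by
    refine ((integrable_sinc_sq.comp_sub_right (ℓ : ℝ)).add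
      (integrable_sinc_sq.comp_sub_right (ℓ' : ℝ))).mono' hgc.aestronglyMeasurable
      (.of_forall fun x => ?_)
    simp only [hg, Pi.add_apply, norm_eq_abs]
    rw [abs_le]
    constructor <;>
      nlinarith [sq_nonneg (sinc (π * (x - ℓ)) + sinc (π * (x - ℓ'))),
        sq_nonneg (sinc (π * (x - ℓ)) - sinc (π * (x - ℓ'))),
        sq_nonneg (sinc (π * (x - ℓ))), sq_nonneg (sinc (π * (x - ℓ')))]
  have hsum : ∀ u : ℝ, HasSum (fun k : ℤ => g (u + k)) (if ℓ = ℓ' then 1 else 0) := fun u => by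
    have h := (Equiv.neg ℤ).hasSum_iff.2 (hasSum_sinc_mul_sinc (u - ℓ) (u - ℓ'))
    convert h using 1
    · ext k
      simp only [hg, Function.comp, Equiv.neg_apply]
      push_cast
      congr 3 <;> ring
    · split_ifs with hl
      · simp [hl]
      · have hne : ((ℓ' : ℝ) - ℓ) ≠ 0 := sub_ne_zero.2 (by exact_mod_cast Ne.symm hl)
        rw [show π * (u - ℓ - (u - ℓ')) = ((ℓ' - ℓ : ℤ) : ℝ) * π by push_cast; ring,
          sinc_of_ne_zero (by push_cast; exact mul_ne_zero hne pi_ne_zero), sin_int_mul_pi,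
          zero_div]
  have h1 := hgi.hasSum_intervalIntegral_comp_add_int
  have h2 := hgi.norm.hasSum_intervalIntegral_comp_add_int.summable
  simp only [intervalIntegral.integral_of_le zero_le_one] at h1 h2
  have h3 := hasSum_integral_of_summable_integral_norm
    (F := fun (k : ℤ) (u : ℝ) => g (u + k)) (μ := volume.restrict (Set.Ioc (0 : ℝ) 1))
    (fun k => (hgi.comp_add_right (k : ℝ)).integrableOn) h2
  rw [h1.unique h3]
  simp [(hsum _).tsum_eq]

/-- Unlike `sincW W τ`, whose case split is on `τ`, Mathlib's `sinc` splits on the whole argument;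
the two agree because `W ≠ 0`. -/
lemma sincW_eq_sinc {W : ℝ} (hW : 0 < W) (τ : ℝ) : sincW W τ = sinc (π * (W * τ)) := by
  rcases eq_or_ne τ 0 with rfl | h
  · simp [sincW]
  · rw [sincW, if_neg h, sinc_of_ne_zero (by positivity), mul_assoc]

/-- Classical orthogonality of shifted sinc functions (Shannon's equation 11):
for `W > 0` and integers `ℓ, ℓ′`,
`∫ sinc_W(t − ℓ/W) sinc_W(t − ℓ′/W) dt` is `0` if `ℓ ≠ ℓ′` and `1/W` if `ℓ = ℓ′`. -/
theorem sincW_orthogonal (W : ℝ) (hW : 0 < W) (ℓ ℓ' : ℤ) :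
    (∫ t : ℝ, sincW W (t - ℓ / W) * sincW W (t - ℓ' / W)) =
      if ℓ = ℓ' then 1 / W else 0 := by
  have h := Measure.integral_comp_mul_left
    (fun u : ℝ => sinc (π * (u - ℓ)) * sinc (π * (u - ℓ'))) W
  rw [integral_sinc_mul_sinc] at h
  simp only [sincW_eq_sinc hW, mul_sub, mul_div_cancel₀ _ hW.ne'] at h ⊢
  rw [h, abs_of_pos (inv_pos.2 hW)]
  split_ifs <;> simp
end

section
/- With the definitions below, Σ_{n=N_min+1}^{N_max} (2n+1)·(F₀ + W − F_n) ≤ 2W · [ 2·(e·π·R/c)²·(F₀·W − W²/3) + e·π·(R/c)·(2F₀ − W) + (ln ρ)·(e·π·W·R/c + 1) ]. -/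
open Real Finset

/-!
Put `k = eπR/c`, `a = k(F₀ - W) + (ln ρ)/2` and `b = k(F₀ + W) + (ln ρ)/2`, so that
`Nmin = ⌈a⌉`, `Nmax = ⌈b⌉` and `F₀ + W - F n = (b - n)/k`. With `d = b - a = 2kW`, the right-hand side
times `k` is `∫ x in a..b, (2x + 1)(b - x) + 2ad = ad² + d²/2 + d³/3 + 2ad`.
The sum has a closed form (`sum_reduced_modes`), and with `D = ⌈b⌉ - ⌈a⌉` and rounding errors
`s = ⌈a⌉ - a`, `t = ⌈b⌉ - b` in `[0, 1]` the difference of the two sides is a polynomial in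
`a, D, s, t` that is visibly nonnegative (`reduced_modes_poly`).
-/

theorem sum_reduced_modes (b : ℝ) (m D : ℕ) :
    ∑ n ∈ Finset.Icc (m + 1) (m + D), (2 * (n : ℝ) + 1) * (b - n) =
      (m : ℝ) * (D ^ 2 - D) + D ^ 3 / 3 + D ^ 2 / 2 - 5 * D / 6
        - (m + D - b) * (D ^ 2 + 2 * D * (m + 1)) := by
  induction D with
  | zero => simp
  | succ D ih =>
    rw [← Nat.add_assoc, Finset.sum_Icc_succ_top (by omega), ih]
    push_cast
    ring

/-- The closed form of the mode sum is at most the integral `ad² + d²/2 + d³/3` plus `2ad`, where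
`d = D + s - t` is the length of the interval `[a, b]` and `a + s` is the ceiling of `a`. -/
theorem reduced_modes_poly (a s t D : ℝ) (ha : 0 ≤ a) (hs : 0 ≤ s) (ht : 0 ≤ t) (ht1 : t ≤ 1)
    (hD : D = 0 ∨ 1 ≤ D) (hd : 0 ≤ D + s - t) :
    (a + s) * (D ^ 2 - D) + D ^ 3 / 3 + D ^ 2 / 2 - 5 * D / 6
        - t * (D ^ 2 + 2 * D * (a + s + 1)) ≤
      a * (D + s - t) ^ 2 + (D + s - t) ^ 2 / 2 + (D + s - t) ^ 3 / 3 + 2 * a * (D + s - t) := by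
  have hD0 : 0 ≤ D := by rcases hD with h | h <;> linarith
  -- the coefficient of `a` in the difference
  have h1 : 0 ≤ 2 * D * s + (s - t) ^ 2 + 3 * D + 2 * (s - t) := by
    have := mul_nonneg hD0 hs
    have := sq_nonneg (s - t)
    rcases hD with h | h
    · subst h; nlinarith
    · nlinarith
  have h2 : 0 ≤ D * (2 * s + t + 5 / 6 + 2 * t * s + (s - t) ^ 2) := by positivity
  have h3 : 0 ≤ (s - t) ^ 2 * (1 / 2 + (s - t) / 3) :=
    mul_nonneg (sq_nonneg _) (by linarith)
  have h4 := mul_nonneg ha h1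
  linear_combination h4 + h2 + h3

/-- **Bound on the contribution `D₃` of the modes with reduced effective bandwidth**
(used in the proof of Theorem 4): with critical frequencies
`F_n = nc/(eπR) − (c/(2eπR)) ln ρ` and mode numbers
`N_min = ⌈eπ(F₀−W)R/c + (1/2) ln ρ⌉`, `N_max = ⌈eπ(F₀+W)R/c + (1/2) ln ρ⌉`,
`Σ_{n=N_min+1}^{N_max} (2n+1)(F₀+W−F_n)
  ≤ 2W [ 2(eπR/c)²(F₀W − W²/3) + eπ(R/c)(2F₀ − W) + (ln ρ)(eπWR/c + 1) ]`. -/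
theorem reduced_bandwidth_modes_bound
    (R c T F₀ W ρ : ℝ)
    (hR : 0 < R) (hc : 0 < c) (hT : 0 ≤ T)
    (hW : 0 < W) (hWF : W ≤ F₀) (hρ : 1 ≤ ρ)
    (F : ℕ → ℝ)
    (hF : ∀ n : ℕ, F n = (n : ℝ) * c / (Real.exp 1 * π * R) -
      c / (2 * Real.exp 1 * π * R) * Real.log ρ)
    (Nmin Nmax : ℕ)
    (hNmin : (Nmin : ℤ) = ⌈Real.exp 1 * π * (F₀ - W) * R / c + 1 / 2 * Real.log ρ⌉)
    (hNmax : (Nmax : ℤ) = ⌈Real.exp 1 * π * (F₀ + W) * R / c + 1 / 2 * Real.log ρ⌉) :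
    (∑ n ∈ Finset.Icc (Nmin + 1) Nmax, (2 * (n : ℝ) + 1) * (F₀ + W - F n)) ≤
      2 * W * (2 * (Real.exp 1 * π * R / c) ^ 2 * (F₀ * W - W ^ 2 / 3) +
        Real.exp 1 * π * (R / c) * (2 * F₀ - W) +
        Real.log ρ * (Real.exp 1 * π * W * R / c + 1)) := by
  set L := Real.log ρ with hL
  have hL0 : 0 ≤ L := Real.log_nonneg hρ
  obtain ⟨k, hk⟩ : ∃ k, k = Real.exp 1 * π * R / c := ⟨_, rfl⟩
  have hk0 : 0 < k := by rw [hk]; positivity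
  obtain ⟨a, ha⟩ : ∃ a, a = k * (F₀ - W) + L / 2 := ⟨_, rfl⟩
  obtain ⟨b, hb⟩ : ∃ b, b = k * (F₀ + W) + L / 2 := ⟨_, rfl⟩
  have hkW : 0 < k * W := mul_pos hk0 hW
  have ha0 : 0 ≤ a := by
    have := mul_nonneg hk0.le (sub_nonneg.2 hWF)
    linarith
  have hba : b - a = 2 * (k * W) := by rw [ha, hb]; ring
  have ea : Real.exp 1 * π * (F₀ - W) * R / c + 1 / 2 * L = a := by rw [ha, hk]; ring
  have eb : Real.exp 1 * π * (F₀ + W) * R / c + 1 / 2 * L = b := by rw [hb, hk]; ring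
  rw [ea] at hNmin
  rw [eb] at hNmax
  have hle : Nmin ≤ Nmax := by
    have : (Nmin : ℤ) ≤ Nmax := by
      rw [hNmin, hNmax]; exact Int.ceil_mono (by linarith)
    exact_mod_cast this
  have cmin : (Nmin : ℝ) = (⌈a⌉ : ℤ) := by rw [← hNmin]; simp
  have cmax : (Nmax : ℝ) = (⌈b⌉ : ℤ) := by rw [← hNmax]; simp
  have m1 : a ≤ Nmin := cmin ▸ Int.le_ceil a
  have M1 : b ≤ Nmax := cmax ▸ Int.le_ceil b
  have M2 : (Nmax : ℝ) < b + 1 := cmax ▸ Int.ceil_lt_add_one b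
  obtain ⟨D, rfl⟩ := Nat.exists_eq_add_of_le hle
  push_cast at M1 M2
  have hD : (D : ℝ) = 0 ∨ 1 ≤ (D : ℝ) := by
    rcases Nat.eq_zero_or_pos D with h | h
    · left; exact_mod_cast h
    · right; exact_mod_cast h
  have hsum : ∑ n ∈ Finset.Icc (Nmin + 1) (Nmin + D), (2 * (n : ℝ) + 1) * (F₀ + W - F n) =
      (∑ n ∈ Finset.Icc (Nmin + 1) (Nmin + D), (2 * (n : ℝ) + 1) * (b - n)) / k := by
    rw [Finset.sum_div]
    refine Finset.sum_congr rfl fun n _ => ?_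
    rw [hF n, hb, hk]
    field_simp
    ring
  rw [hsum, div_le_iff₀ hk0, sum_reduced_modes]
  have key := reduced_modes_poly a (Nmin - a) (Nmin + D - b) D ha0 (by linarith) (by linarith)
    (by linarith) hD (by linarith)
  have ed : (D : ℝ) + (Nmin - a) - (Nmin + D - b) = 2 * (k * W) := by linarith
  rw [ed, add_sub_cancel] at key
  refine key.trans (le_of_eq ?_)
  have e1 : Real.exp 1 * π * (R / c) = k := by rw [hk]; ring
  have e2 : Real.exp 1 * π * W * R / c = k * W := by rw [hk]; ring
  rw [e1, e2, ← hk, ha]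
  ring
end

section
/- With the definitions below, the total degrees of freedom satisfies Σ_{n=0}^{N_max} (2n+1)·(W_n·T_eff + 1) ≤ (N_max + 1)² + 2W·(T + 2R/c) · [ (N_min + 1)² + 2·(e·π·R/c)²·(F₀·W − W²/3) + e·π·(R/c)·(2F₀ − W) + (ln ρ)·(e·π·W·R/c + 1) ]. -/
/-!
Put `k = eπR/c`, `a = k(F₀ - W) + (ln ρ)/2`, `b = k(F₀ + W) + (ln ρ)/2` and `D = b - a = 2kW`. Then
`Nmin = ⌈a⌉`, `Nmax = ⌈b⌉`, and above `Nmin` the effective bandwidth is `(b - n)/k`. The `+ 1` terms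
sum exactly to `(Nmax + 1)²`, and the modes `n ≤ Nmin` contribute exactly `2W (Nmin + 1)² Teff`.
After multiplication by `k`, what remains is

  `∑_{⌈a⌉ < n ≤ ⌈b⌉} (2n + 1)(b - n) ≤ a D² + D³/3 + D²/2 + 2 a D`,

whose right-hand side is `∫ₐᵇ (2x + 1)(b - x) dx + 2 a D`. This is `tail_sum_le`. The summand
`n = ⌈b⌉` is nonpositive; the other summands are added up in closed form (`sum_closed_form`), and the
resulting polynomial inequality (`core_ineq`) is elementary: its cubic and quadratic parts in the
number of summands cancel, and the remaining coefficients are nonnegative.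
-/


open Real Finset

theorem sum_odd (N : ℕ) : ∑ n ∈ Finset.range N, (2 * (n : ℝ) + 1) = (N : ℝ) ^ 2 := by
  induction N with
  | zero => simp
  | succ N ih => rw [Finset.sum_range_succ, ih]; push_cast; ring

theorem sum_closed_form (m b : ℝ) (K : ℕ) :
    ∑ j ∈ Finset.range K, (2 * (m + 1 + j) + 1) * (b - (m + 1 + j)) =
      (2 * m + 1) * (K * (b - m) - K * (K + 1) / 2) + (b - m) * K * (K + 1)
        - K * (K + 1) * (2 * K + 1) / 3 := by
  induction K with
  | zero => simp
  | succ K ih => rw [Finset.sum_range_succ, ih]; push_cast; ring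

/-- The inequality `∑_{m < n ≤ m + K} (2n + 1)(b - n) ≤ a D² + D³/3 + 2 a D + D²/2` in closed form,
with `a = m - s`, `b = m + K + β` and `D = b - a = K + β + s`. Here `s` and `β` are the fractional
offsets of `a` below `m = ⌈a⌉` and of `b` above `⌈b⌉ - 1 = m + K`. -/
theorem core_ineq (m K : ℕ) (s β : ℝ) (hs : 0 ≤ s) (hs1 : s ≤ 1) (hsm : s ≤ m)
    (hβ : 0 ≤ β) :
    (2 * (m : ℝ) + 1) * (K * (K + β) - K * (K + 1) / 2) + (K + β) * K * (K + 1)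
        - K * (K + 1) * (2 * K + 1) / 3 ≤
      (m - s) * (K + β + s) ^ 2 + (K + β + s) ^ 3 / 3 + 2 * (m - s) * (K + β + s)
        + (K + β + s) ^ 2 / 2 := by
  have hK : (0 : ℝ) ≤ K := Nat.cast_nonneg K
  rcases Nat.eq_zero_or_pos m with rfl | hm
  · have h0 : s = 0 := le_antisymm (by simpa using hsm) hs
    subst h0
    have h1 : 0 ≤ (K : ℝ) * (β ^ 2 - β + 5 / 6) :=
      mul_nonneg hK (by nlinarith [sq_nonneg (β - 1 / 2)])
    have h2 : 0 ≤ β ^ 3 / 3 + β ^ 2 / 2 := by positivity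
    push_cast
    linear_combination h1 + h2
  · have hm1 : (0 : ℝ) ≤ (m : ℝ) - 1 := by
      have : (1 : ℝ) ≤ m := by exact_mod_cast hm
      linarith
    have hs2 : 0 ≤ 1 - s := by linarith
    -- The difference of the two sides is affine in `m`: its slope, then its value at `m = 1`.
    have h1 : 0 ≤ ((m : ℝ) - 1) *
        (β ^ 2 + 2 * s * (K + β) + s ^ 2 + 2 * (K + β + s) + K) :=
      mul_nonneg hm1 (by positivity)
    have h2 : 0 ≤ (K : ℝ) * ((β - 1 / 2) ^ 2 + s * (1 - s) + 43 / 12) :=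
      mul_nonneg hK (by positivity)
    have h3 : 0 ≤ (1 - s) * (β + s) ^ 2 + (β + s) ^ 3 / 3 + 2 * (1 - s) * (β + s)
        + (β + s) ^ 2 / 2 := by positivity
    linear_combination h1 + h2 + h3

/-- Comparison of the sum over the modes between `m = ⌈a⌉` and `m + J = ⌈b⌉` with the integral
`∫ₐᵇ (2x + 1)(b - x) dx`, up to the correction `2 a (b - a)`. -/
theorem tail_sum_le (m J : ℕ) (a b : ℝ) (ha : 0 ≤ a) (hab : a ≤ b)
    (h1 : (m : ℝ) - 1 ≤ a) (h2 : a ≤ m) (h3 : (m : ℝ) + J - 1 ≤ b) (h4 : b ≤ m + J) :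
    ∑ j ∈ Finset.range J, (2 * ((m : ℝ) + 1 + j) + 1) * (b - (m + 1 + j)) ≤
      a * (b - a) ^ 2 + (b - a) ^ 3 / 3 + 2 * a * (b - a) + (b - a) ^ 2 / 2 := by
  have hD : 0 ≤ b - a := by linarith
  cases J with
  | zero => rw [Finset.sum_range_zero]; positivity
  | succ K =>
    push_cast at h3 h4
    rw [Finset.sum_range_succ, sum_closed_form]
    have hlast : (2 * ((m : ℝ) + 1 + K) + 1) * (b - (m + 1 + K)) ≤ 0 :=
      mul_nonpos_of_nonneg_of_nonpos (by positivity) (by linarith)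
    have := core_ineq m K (m - a) (b - m - K) (by linarith) (by linarith) (by linarith)
      (by linarith)
    linear_combination this + hlast

/-- **Theorem 4 (Upper bound to signal degrees of freedom).**
Given a multipath field band limited to `[F₀−W, F₀+W]`, observed over the time
interval `[0, T]` within a 3D spherical region of radius `R`, with
`T_eff = T + 2R/c`, critical frequencies `F_n = nc/(eπR) − (c/(2eπR)) ln ρ`,
mode numbers `N_min = ⌈eπ(F₀−W)R/c + (1/2) ln ρ⌉`, `N_max = ⌈eπ(F₀+W)R/c + (1/2) ln ρ⌉`
and effective bandwidths `W_n = 2W` for `n ≤ N_min`, `W_n = F₀+W−F_n` for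
`N_min < n ≤ N_max`, `W_n = 0` otherwise, the total degrees of freedom
`D = Σ_{n=0}^{N_max} (2n+1)(W_n T_eff + 1)` satisfies
`D ≤ (N_max+1)² + 2W(T + 2R/c)[(N_min+1)² + 2(eπR/c)²(F₀W − W²/3)
      + eπ(R/c)(2F₀ − W) + (ln ρ)(eπWR/c + 1)]`. -/
theorem signal_degrees_of_freedom_upper_bound
    (R c T F₀ W ρ : ℝ)
    (hR : 0 < R) (hc : 0 < c) (hT : 0 ≤ T)
    (hW : 0 < W) (hWF : W ≤ F₀) (hρ : 1 ≤ ρ)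
    (F : ℕ → ℝ)
    (hF : ∀ n : ℕ, F n = (n : ℝ) * c / (Real.exp 1 * π * R) -
      c / (2 * Real.exp 1 * π * R) * Real.log ρ)
    (Teff : ℝ) (hTeff : Teff = T + 2 * R / c)
    (Nmin Nmax : ℕ)
    (hNmin : (Nmin : ℤ) = ⌈Real.exp 1 * π * (F₀ - W) * R / c + 1 / 2 * Real.log ρ⌉)
    (hNmax : (Nmax : ℤ) = ⌈Real.exp 1 * π * (F₀ + W) * R / c + 1 / 2 * Real.log ρ⌉)
    (Wn : ℕ → ℝ)
    (hWn : ∀ n : ℕ, Wn n =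
      if n ≤ Nmin then 2 * W
      else if n ≤ Nmax then F₀ + W - F n
      else 0) :
    (∑ n ∈ Finset.range (Nmax + 1), (2 * (n : ℝ) + 1) * (Wn n * Teff + 1)) ≤
      ((Nmax : ℝ) + 1) ^ 2 + 2 * W * (T + 2 * R / c) *
        (((Nmin : ℝ) + 1) ^ 2 +
          2 * (Real.exp 1 * π * R / c) ^ 2 * (F₀ * W - W ^ 2 / 3) +
          Real.exp 1 * π * (R / c) * (2 * F₀ - W) +
          Real.log ρ * (Real.exp 1 * π * W * R / c + 1)) := by
  have hk : 0 < Real.exp 1 * π * R / c := by positivity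
  have hL : 0 ≤ Real.log ρ := Real.log_nonneg hρ
  have hTe : 0 ≤ Teff := by rw [hTeff]; positivity
  rw [← hTeff]
  obtain ⟨k, hkdef⟩ : ∃ k, k = Real.exp 1 * π * R / c := ⟨_, rfl⟩
  obtain ⟨L, hLdef⟩ : ∃ L, L = Real.log ρ := ⟨_, rfl⟩
  have ea : Real.exp 1 * π * (F₀ - W) * R / c + 1 / 2 * Real.log ρ
      = k * (F₀ - W) + L / 2 := by rw [hkdef, hLdef]; ring
  have eb : Real.exp 1 * π * (F₀ + W) * R / c + 1 / 2 * Real.log ρ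
      = k * (F₀ + W) + L / 2 := by rw [hkdef, hLdef]; ring
  have e1 : Real.exp 1 * π * (R / c) = k := by rw [hkdef]; ring
  have e2 : Real.exp 1 * π * W * R / c = k * W := by rw [hkdef]; ring
  have eF : ∀ n : ℕ, F₀ + W - F n = (k * (F₀ + W) + L / 2 - n) / k := by
    intro n
    rw [hF, hkdef, hLdef]
    have := Real.exp_pos 1
    have := Real.pi_pos
    field_simp
    ring
  rw [ea] at hNmin
  rw [eb] at hNmax
  rw [e1, e2, ← hkdef, ← hLdef]
  rw [← hkdef] at hk
  rw [← hLdef] at hL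
  obtain ⟨a, hadef⟩ : ∃ a, a = k * (F₀ - W) + L / 2 := ⟨_, rfl⟩
  obtain ⟨b, hbdef⟩ : ∃ b, b = k * (F₀ + W) + L / 2 := ⟨_, rfl⟩
  rw [← hadef] at hNmin
  rw [← hbdef] at hNmax
  simp only [← hbdef] at eF
  have hkW : 0 < k * W := mul_pos hk hW
  have ha : 0 ≤ a := by
    have : 0 ≤ k * (F₀ - W) := mul_nonneg hk.le (by linarith)
    linarith
  have hD : b - a = 2 * (k * W) := by rw [hadef, hbdef]; ring
  have hab : a ≤ b := by linarith
  have hle : Nmin ≤ Nmax := by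
    have := Int.ceil_mono hab
    omega
  have hmin : (Nmin : ℝ) = (⌈a⌉ : ℝ) := by exact_mod_cast congrArg (Int.cast : ℤ → ℝ) hNmin
  have hmax : (Nmax : ℝ) = (⌈b⌉ : ℝ) := by exact_mod_cast congrArg (Int.cast : ℤ → ℝ) hNmax
  have a1 := Int.le_ceil a
  have a2 := Int.ceil_lt_add_one a
  have b1 := Int.le_ceil b
  have b2 := Int.ceil_lt_add_one b
  rw [← hmin] at a1 a2
  rw [← hmax] at b1 b2
  obtain ⟨J, rfl⟩ := Nat.exists_eq_add_of_le hle
  push_cast at b1 b2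
  have htail := tail_sum_le Nmin J a b ha hab (by linarith) a1 (by linarith) b1
  have hlow : ∑ n ∈ Finset.range (Nmin + 1), (2 * (n : ℝ) + 1) * Wn n
      = 2 * W * ((Nmin : ℝ) + 1) ^ 2 := by
    have h := sum_odd (Nmin + 1)
    push_cast at h
    rw [← h, Finset.mul_sum]
    refine Finset.sum_congr rfl fun n hn => ?_
    rw [hWn, if_pos (by have := Finset.mem_range.mp hn; omega)]
    ring
  have hhigh : ∑ j ∈ Finset.range J, (2 * ((Nmin + 1 + j : ℕ) : ℝ) + 1) * Wn (Nmin + 1 + j)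
      = (∑ j ∈ Finset.range J,
          (2 * ((Nmin : ℝ) + 1 + j) + 1) * (b - (Nmin + 1 + j))) / k := by
    rw [Finset.sum_div]
    refine Finset.sum_congr rfl fun j hj => ?_
    have := Finset.mem_range.mp hj
    rw [hWn, if_neg (by omega), if_pos (by omega), eF]
    push_cast
    ring
  have hsplit : ∑ n ∈ Finset.range (Nmin + J + 1), (2 * (n : ℝ) + 1) * (Wn n * Teff + 1)
      = ((Nmin : ℝ) + J + 1) ^ 2
        + Teff * ∑ n ∈ Finset.range (Nmin + 1 + J), (2 * (n : ℝ) + 1) * Wn n := by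
    have h := sum_odd (Nmin + J + 1)
    push_cast at h
    rw [← h, show Nmin + 1 + J = Nmin + J + 1 by ring, Finset.mul_sum,
      ← Finset.sum_add_distrib]
    exact Finset.sum_congr rfl fun n _ => by ring
  rw [hsplit, Finset.sum_range_add, hlow, hhigh]
  have hdiv := div_le_div_of_nonneg_right htail hk.le
  -- Divided by `k`, the bound on the tail is `2W` times the bracket without `(Nmin + 1)²`.
  have hrhs : (a * (b - a) ^ 2 + (b - a) ^ 3 / 3 + 2 * a * (b - a) + (b - a) ^ 2 / 2) / k
      = 2 * W * (2 * k ^ 2 * (F₀ * W - W ^ 2 / 3) + k * (2 * F₀ - W) + L * (k * W + 1)) := by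
    rw [hD, hadef]
    field_simp
    ring
  rw [hrhs] at hdiv
  have := mul_le_mul_of_nonneg_left hdiv hTe
  push_cast
  linear_combination this
end
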